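/- For every integer b ≥ 0, the polynomial P_b is given by the terminating q-hypergeometric formula P_b(x,y,z) = ∑_{n=0}^{b} [(q^{−2b};q²)_n · (q^{2−2b}·y·z;q²)_n · (q^{2+2n−2b}·z;q²)_{b−n} / (q²;q²)_n] · (q²·x)^n, where for an element a of K[x,y,z] and p ∈ K, (a;p)_n = ∏_{j=0}^{n−1}(1 − a·p^j); in particular (q^{2−2b}·y·z;q²)_n = ∏_{j=0}^{n−1}(1 − q^{2−2b+2j}·y·z) and (q^{2+2n−2b}·z;q²)_{b−n} = ∏_{j=0}^{b−n−1}(1 − q^{2+2n−2b+2j}·z). -/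

import Mathlib

noncomputable section

open MvPolynomial

/-- The field `K = ℚ(q)` of rational functions in `q` over `ℚ`. -/
abbrev K : Type := RatFunc ℚ

/-- The variable `q ∈ K = ℚ(q)`. -/
def q : K := RatFunc.X

/-- The polynomial ring `K[x,y,z]`. -/
abbrev P3 : Type := MvPolynomial (Fin 3) K

/-- The polynomials `P_b(x,y,z)`, defined by `P_0 = 1` and
`P_{b+1}(x,y,z) = (1−z)·P_b(x,y,q^{−2}z) − q^{−2b}·x·(1 − q^{−2b}·y·z)·P_b(x,y,z)`. -/
def P : ℕ → P3
  | 0 => 1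
  | b + 1 =>
      (1 - X 2) * (aeval ![(X 0 : P3), X 1, C (q ^ (-2 : ℤ)) * X 2] (P b))
    - C (q ^ (-2 * (b : ℤ))) * X 0 * (1 - C (q ^ (-2 * (b : ℤ))) * X 1 * X 2) * P b

open Finset in
/-- The q-Pochhammer symbol `(a;p)_n = ∏_{j<n} (1 − a·p^j)` in `K`. -/
def poch (a p : K) (n : ℕ) : K := ∏ j ∈ range n, (1 - a * p ^ j)

/-! Put `p = q²` and regard `P_b` as a function of `z`. Multiplying by `1 - z` and contracting `z`
to `p⁻¹ z` raises the index `b` of each hypergeometric term, while multiplying by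
`p x (1 - p⁻ᵇ y z)` raises both `b` and `n`. Comparing coefficients in the recurrence for `P_b`
leaves a Pascal-type recurrence for the scalars `(p⁻ᵇ; p)_n / (p; p)_n`. -/

section

open Finset

section qPochhammer

variable {F A : Type*} [CommRing F] [CommRing A] [Algebra F A]

/-- The q-Pochhammer symbol `(a; p)_n` of an element `a` of an algebra, with a scalar base `p`. -/
def qPochhammer (a : A) (p : F) (n : ℕ) : A := ∏ j ∈ range n, (1 - p ^ j • a)

@[simp]
lemma qPochhammer_zero (a : A) (p : F) : qPochhammer a p 0 = 1 := prod_range_zero _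

lemma qPochhammer_succ (a : A) (p : F) (n : ℕ) :
    qPochhammer a p (n + 1) = qPochhammer a p n * (1 - p ^ n • a) :=
  prod_range_succ _ n

lemma qPochhammer_succ' (a : A) (p : F) (n : ℕ) :
    qPochhammer a p (n + 1) = (1 - a) * qPochhammer (p • a) p n := by
  simp only [qPochhammer, prod_range_succ', pow_zero, one_smul, smul_smul, ← pow_succ]
  exact mul_comm _ _

lemma qPochhammer_self_ne_zero [IsDomain F] {p : F} (hp : ¬IsOfFinOrder p) (n : ℕ) :
    qPochhammer p p n ≠ 0 :=
  prod_ne_zero_iff.mpr fun j _ h ↦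
    hp <| isOfFinOrder_iff_pow_eq_one.mpr
      ⟨j + 1, j.succ_pos, (pow_succ p j).trans (sub_eq_zero.mp h).symm⟩

end qPochhammer

lemma zpow_neg_succ_mul_self {G₀ : Type*} [GroupWithZero G₀] {p : G₀} (hp₀ : p ≠ 0) (b : ℕ) :
    p ^ (-(b + 1 : ℕ) : ℤ) * p = p ^ (-b : ℤ) := by
  rw [← zpow_add_one₀ hp₀, Nat.cast_succ, neg_add, neg_add_cancel_right]

section Recurrence

variable {F A : Type*} [Field F] [CommRing A] [Algebra F A] {p : F}

/-- The scalar `(p⁻ᵇ; p)_n / (p; p)_n`, a q-analogue of `(-1)ⁿ (b choose n)`. -/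
def qhgCoeff (p : F) (b n : ℕ) : F :=
  qPochhammer (p ^ (-b : ℤ)) p n / qPochhammer p p n

@[simp]
lemma qhgCoeff_zero (p : F) (b : ℕ) : qhgCoeff p b 0 = 1 := by simp [qhgCoeff]

lemma qhgCoeff_self_succ (hp₀ : p ≠ 0) (b : ℕ) : qhgCoeff p b (b + 1) = 0 := by
  simp [qhgCoeff, qPochhammer_succ, hp₀]

lemma qhgCoeff_succ_succ (hp₀ : p ≠ 0) (hp : ¬IsOfFinOrder p) (b n : ℕ) :
    qhgCoeff p (b + 1) (n + 1) =
      qhgCoeff p b (n + 1) - p ^ (-(b + 1 : ℕ) : ℤ) * qhgCoeff p b n := by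
  have hb : p • p ^ (-(b + 1 : ℕ) : ℤ) = p ^ (-b : ℤ) := by
    rw [smul_eq_mul, mul_comm, zpow_neg_succ_mul_self hp₀]
  have hn := qPochhammer_self_ne_zero hp (n + 1)
  rw [qPochhammer_succ, mul_ne_zero_iff] at hn
  obtain ⟨h₁, h₂⟩ := hn
  rw [qhgCoeff, qPochhammer_succ', hb, qhgCoeff, qhgCoeff, qPochhammer_succ, qPochhammer_succ,
    ← hb]
  simp only [smul_eq_mul, ← pow_succ] at h₂ ⊢
  field_simp
  ring

/-- The part `(p¹⁻ᵇ y z; p)_n (p¹⁺ⁿ⁻ᵇ z; p)_{b-n} (p x)ⁿ` of the `n`-th hypergeometric term that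
depends on `x`, `y` and `z`. -/
def qhgTerm (p : F) (x y : A) (b n : ℕ) (z : A) : A :=
  qPochhammer (p ^ (1 - b : ℤ) • (y * z)) p n *
    qPochhammer (p ^ (1 + n - b : ℤ) • z) p (b - n) * (p • x) ^ n

lemma qhgTerm_contract (hp₀ : p ≠ 0) (x y z : A) {b n : ℕ} (hn : n ≤ b) :
    (1 - z) * qhgTerm p x y b n (p⁻¹ • z) = qhgTerm p x y (b + 1) n z := by
  have hshift (k : ℤ) : p ^ (k - b) * p⁻¹ = p ^ (k - (b + 1 : ℕ)) := by
    rw [← zpow_sub_one₀ hp₀, Nat.cast_succ, sub_sub]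
  have hlast : p ^ (b - n) * p ^ (1 + n - (b + 1 : ℕ) : ℤ) = 1 := by
    rw [← zpow_natCast, ← zpow_add₀ hp₀, Nat.cast_sub hn]
    convert zpow_zero p using 2
    push_cast
    ring
  rw [qhgTerm, qhgTerm, Nat.succ_sub hn, qPochhammer_succ _ _ (b - n)]
  simp only [mul_smul_comm, smul_smul, hshift, hlast, one_smul]
  ring

lemma qhgTerm_succ_succ (hp₀ : p ≠ 0) (x y z : A) (b n : ℕ) :
    (p • x) * (1 - p ^ (-b : ℤ) • (y * z)) * qhgTerm p x y b n z =
      qhgTerm p x y (b + 1) (n + 1) z := by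
  have hy : (1 - (b + 1 : ℕ) : ℤ) = -b := by push_cast; ring
  have hy' : p • p ^ (-b : ℤ) • (y * z) = p ^ (1 - b : ℤ) • (y * z) := by
    rw [smul_smul, ← zpow_one_add₀ hp₀, sub_eq_add_neg]
  have hz : (1 + (n + 1 : ℕ) - (b + 1 : ℕ) : ℤ) = 1 + n - b := by push_cast; ring
  rw [qhgTerm, qhgTerm, hy, hz, Nat.add_sub_add_right, qPochhammer_succ', hy']
  ring

/-- The value `P_b(x, y, z)` at points of an `F`-algebra, with an arbitrary scalar `p` in place of
`q²`. The substitution `z ↦ p⁻¹ z` becomes a change of argument, so no polynomial ring is needed. -/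
def evalP (p : F) (x y : A) : ℕ → A → A
  | 0, _ => 1
  | b + 1, z =>
      (1 - z) * evalP p x y b (p⁻¹ • z)
        - p ^ (-b : ℤ) • (x * (1 - p ^ (-b : ℤ) • (y * z)) * evalP p x y b z)

theorem P_qhg_general (hp₀ : p ≠ 0) (hp : ¬IsOfFinOrder p) (x y : A) (b : ℕ) (z : A) :
    evalP p x y b z = ∑ n ∈ range (b + 1), qhgCoeff p b n • qhgTerm p x y b n z := by
  induction b generalizing z with
  | zero => simp [evalP, qhgTerm]
  | succ b ih =>
    have hcontract : (1 - z) * evalP p x y b (p⁻¹ • z) =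
        ∑ n ∈ range (b + 2), qhgCoeff p b n • qhgTerm p x y (b + 1) n z := by
      rw [sum_range_succ, qhgCoeff_self_succ hp₀, zero_smul, add_zero, ih, mul_sum]
      refine sum_congr rfl fun n hn ↦ ?_
      rw [mul_smul_comm, qhgTerm_contract hp₀ x y z (mem_range_succ_iff.mp hn)]
    have hraise : p ^ (-b : ℤ) • (x * (1 - p ^ (-b : ℤ) • (y * z)) * evalP p x y b z) =
        ∑ n ∈ range (b + 1),
          (p ^ (-(b + 1 : ℕ) : ℤ) * qhgCoeff p b n) • qhgTerm p x y (b + 1) (n + 1) z := by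
      rw [ih, mul_sum, smul_sum]
      refine sum_congr rfl fun n _ ↦ ?_
      rw [← qhgTerm_succ_succ hp₀, ← zpow_neg_succ_mul_self hp₀]
      simp only [mul_smul_comm, smul_mul_assoc, smul_smul]
      ring_nf
    rw [evalP, hcontract, hraise, sum_range_succ', sum_range_succ' _ (b + 1),
      add_sub_right_comm, ← sum_sub_distrib]
    simp only [qhgCoeff_succ_succ hp₀ hp, sub_smul, qhgCoeff_zero]

end Recurrence

lemma q_ne_zero : q ≠ 0 := RatFunc.X_ne_zero

lemma not_isOfFinOrder_q_sq : ¬IsOfFinOrder (q ^ 2) := by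
  intro h
  obtain ⟨n, hn, hqn⟩ := isOfFinOrder_iff_pow_eq_one.mp (h.of_pow two_ne_zero)
  refine RatFunc.transcendental_X (K := ℚ) ⟨Polynomial.X ^ n - 1, ?_, ?_⟩
  · exact Polynomial.X_pow_sub_C_ne_zero hn 1
  · simpa [sub_eq_zero, q] using hqn

lemma q_zpow_neg_two_mul (k : ℤ) : q ^ (-2 * k) = (q ^ 2) ^ (-k) := by
  rw [neg_mul_comm, zpow_mul, zpow_ofNat]

lemma aeval_P {A : Type*} [CommRing A] [Algebra K A] (x y z : A) (b : ℕ) :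
    aeval ![x, y, z] (P b) = evalP (q ^ 2) x y b z := by
  induction b generalizing z with
  | zero => simp [P, evalP]
  | succ b ih =>
    have hsubst : aeval ![x, y, z] (aeval ![(X 0 : P3), X 1, C (q ^ (-2 : ℤ)) * X 2] (P b)) =
        evalP (q ^ 2) x y b ((q ^ 2)⁻¹ • z) := by
      rw [← ih, ← AlgHom.comp_apply, comp_aeval]
      congr 2
      ext i
      fin_cases i <;> simp [Algebra.smul_def]
    rw [P, map_sub, map_mul, hsubst, q_zpow_neg_two_mul, evalP]
    simp [Algebra.smul_def, ih, mul_assoc]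

lemma P_eq_evalP (b : ℕ) : P b = evalP (q ^ 2) (X 0) (X 1) b (X 2) := by
  have hX : ![X 0, X 1, X 2] = (X : Fin 3 → P3) := by
    funext i
    fin_cases i <;> rfl
  rw [← aeval_P, hX, aeval_X_left_apply]

lemma prod_one_sub_C_zpow (k : ℤ) (w : P3) (n : ℕ) :
    ∏ j ∈ range n, (1 - C (q ^ (2 * k + 2 * (j : ℤ))) * w) =
      qPochhammer ((q ^ 2) ^ k • w) (q ^ 2) n := by
  refine prod_congr rfl fun j _ ↦ ?_
  rw [smul_smul, smul_eq_C_mul, zpow_add₀ q_ne_zero, zpow_mul, zpow_mul, zpow_ofNat,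
    zpow_natCast, mul_comm ((q ^ 2) ^ k)]

lemma poch_eq_qPochhammer (a p : K) (n : ℕ) : poch a p n = qPochhammer a p n := by
  simp only [poch, qPochhammer, smul_eq_mul, mul_comm]

lemma qhgCoeff_smul_qhgTerm_q_sq (b n : ℕ) :
    qhgCoeff (q ^ 2) b n • qhgTerm (q ^ 2) (X 0 : P3) (X 1) b n (X 2) =
      C (poch (q ^ (-2 * (b : ℤ))) (q ^ 2) n / poch (q ^ 2) (q ^ 2) n)
        * (∏ j ∈ range n, (1 - C (q ^ (2 - 2 * (b : ℤ) + 2 * (j : ℤ))) * X 1 * X 2))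
        * (∏ j ∈ range (b - n),
            (1 - C (q ^ (2 + 2 * (n : ℤ) - 2 * (b : ℤ) + 2 * (j : ℤ))) * X 2))
        * (C (q ^ 2) * X 0) ^ n := by
  have hY : (2 - 2 * b : ℤ) = 2 * (1 - b) := by ring
  have hZ : (2 + 2 * n - 2 * b : ℤ) = 2 * (1 + n - b) := by ring
  simp only [hY, hZ, q_zpow_neg_two_mul, poch_eq_qPochhammer, prod_one_sub_C_zpow, qhgCoeff,
    qhgTerm, smul_eq_C_mul, mul_assoc]

end

open Finset in
/-- the terminating q-hypergeometric formula
`P_b(x,y,z) = ∑_{n=0}^{b} (q^{−2b};q²)_n (q^{2−2b}yz;q²)_n (q^{2+2n−2b}z;q²)_{b−n}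
/ (q²;q²)_n · (q²x)^n`. -/
theorem P_qhg (b : ℕ) :
    P b =
      ∑ n ∈ range (b + 1),
        C (poch (q ^ (-2 * (b : ℤ))) (q ^ 2) n / poch (q ^ 2) (q ^ 2) n)
          * (∏ j ∈ range n,
              (1 - C (q ^ (2 - 2 * (b : ℤ) + 2 * (j : ℤ))) * (X 1 : P3) * X 2))
          * (∏ j ∈ range (b - n),
              (1 - C (q ^ (2 + 2 * (n : ℤ) - 2 * (b : ℤ) + 2 * (j : ℤ))) * (X 2 : P3)))
          * (C (q ^ (2 : ℕ)) * (X 0 : P3)) ^ n := by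
  rw [P_eq_evalP, P_qhg_general (pow_ne_zero 2 q_ne_zero) not_isOfFinOrder_q_sq]
  exact sum_congr rfl fun n _ ↦ qhgCoeff_smul_qhgTerm_q_sq b n
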